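/- (Witt cancellation, geometric form) Let F be a field of characteristic not equal to 2, let (V, q) be an n-dimensional non-degenerate quadratic space over F with n > 1, and let {e₁, …, eₙ} and {f₁, …, fₙ} be two orthogonal bases of (V, q). If q(e₁) = q(f₁), then the restriction of q to Span{e₂, …, eₙ} is isometric to the restriction of q to Span{f₂, …, fₙ}. -/

import Mathlib

/-!
Let `V = ⟨x⟩ ⊥ W = ⟨y⟩ ⊥ W'` with `x, y ≠ 0` and `Q x = Q y`.

If `Q x ≠ 0`, then `W` and `W'` are the full orthogonal complements of `x` and `y`, so any isometry
of `V` taking `x` to `y` restricts to an isometry `W ≃ W'`. Since `Q (x - y) + Q (x + y) = 4 * Q x`,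
one of `x - y`, `x + y` is anisotropic: the reflection in `x - y` takes `x` to `y`, while the
reflection in `x + y` takes `x` to `-y`.

If `Q x = 0`, then both lines lie in the radical, and every complement of a line in the radical is
isometric to the quotient of `V` by that line. So `W` and `W'` are both isometric to a common
complement of the two lines.
-/

open QuadraticMap Submodule

section Complement

theorem isCompl_span_singleton_span_image_ne {R M ι : Type*} [Semiring R] [AddCommMonoid M]
    [Module R M] (b : Module.Basis ι R M) (i : ι) :
    IsCompl (span R {b i}) (span R (b '' {j | j ≠ i})) := by
  rw [← Set.image_singleton]
  exact b.linearIndependent.isCompl_span_image b.span_eq isCompl_compl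

variable {F V : Type*} [Field F] [AddCommGroup V] [Module F V]

theorem isCompl_span_singleton_ker {φ : Module.Dual F V} {x : V} (hx : φ x ≠ 0) :
    IsCompl (span F {x}) φ.ker where
  disjoint := by
    refine disjoint_def.2 fun v hv hφ => ?_
    obtain ⟨c, rfl⟩ := mem_span_singleton.1 hv
    have hc : c = 0 := by simpa [hx] using hφ
    rw [hc, zero_smul]
  codisjoint := codisjoint_iff.2 (φ.span_singleton_sup_ker_eq_top hx)

theorem exists_dual_apply_ne_zero_and_apply_ne_zero {x y : V} (hx : x ≠ 0) (hy : y ≠ 0) :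
    ∃ φ : Module.Dual F V, φ x ≠ 0 ∧ φ y ≠ 0 := by
  obtain ⟨φ, hφ⟩ := Module.Projective.exists_dual_ne_zero F hx
  obtain ⟨ψ, hψ⟩ := Module.Projective.exists_dual_ne_zero F hy
  by_cases hφy : φ y = 0
  · by_cases hψx : ψ x = 0
    · exact ⟨φ + ψ, by simpa [hψx] using hφ, by simpa [hφy] using hψ⟩
    · exact ⟨ψ, hψx, hψ⟩
  · exact ⟨φ, hφ, hφy⟩

end Complement

section Isometry

variable {R M M₁ M₂ N : Type*} [CommRing R] [AddCommGroup M] [AddCommGroup M₁] [AddCommGroup M₂]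
  [AddCommGroup N] [Module R M] [Module R M₁] [Module R M₂] [Module R N]
  {Q₁ : QuadraticMap R M₁ N} {Q₂ : QuadraticMap R M₂ N}

theorem quadraticMap_map_sub (Q : QuadraticMap R M N) (x y : M) :
    Q (x - y) = Q x + Q y - polar Q x y := by
  rw [sub_eq_add_neg, QuadraticMap.map_add Q, Q.map_neg, polar_neg_right, ← sub_eq_add_neg]

theorem quadraticMap_map_add_add_map_sub (Q : QuadraticMap R M N) (x y : M) :
    Q (x + y) + Q (x - y) = 2 • (Q x + Q y) := by
  rw [QuadraticMap.map_add Q, quadraticMap_map_sub]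
  abel

theorem polar_isometryEquiv_apply (σ : Q₁.IsometryEquiv Q₂) (x y : M₁) :
    polar Q₂ (σ x) (σ y) = polar Q₁ x y := by
  simp only [polar, ← map_add, σ.map_app]

theorem equivalent_comp_ker_polarBilin (σ : Q₁.IsometryEquiv Q₂) (x : M₁) :
    (Q₁.comp (Q₁.polarBilin x).ker.subtype).Equivalent
      (Q₂.comp (Q₂.polarBilin (σ x)).ker.subtype) := by
  refine ⟨⟨σ.toLinearEquiv.ofSubmodules _ _ ?_, fun v => σ.map_app v⟩⟩
  ext v
  obtain ⟨w, rfl⟩ := σ.toLinearEquiv.surjective v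
  rw [mem_map_equiv, LinearEquiv.symm_apply_apply]
  exact Eq.congr_left (polar_isometryEquiv_apply σ x w).symm

variable {Q : QuadraticMap R M N} {x : M} {L W : Submodule R M}

theorem polar_eq_zero_of_mem_span {s : Set M} (hs : ∀ w ∈ s, polar Q x w = 0) :
    ∀ w ∈ span R s, polar Q x w = 0 :=
  span_le (p := (Q.polarBilin x).ker).2 hs

theorem span_singleton_le_radical_of_isCompl (hx : Q x = 0) (hW : IsCompl (span R {x}) W)
    (hxW : ∀ w ∈ W, polar Q x w = 0) : span R {x} ≤ Q.radical := by
  have hker : (Q.polarBilin x).ker = ⊤ := by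
    rw [← top_le_iff, ← hW.sup_eq_top, sup_le_iff, span_singleton_le_iff_mem]
    exact ⟨by simp [hx], hxW⟩
  rw [span_singleton_le_iff_mem]
  exact ⟨hx, LinearMap.ker_eq_top.1 hker⟩

theorem equivalent_lift_of_isCompl (hL : L ≤ Q.radical) (hW : IsCompl L W) :
    (Q.comp W.subtype).Equivalent (Q.lift L hL) :=
  ⟨⟨(L.quotientEquivOfIsCompl W hW).symm, fun _ => rfl⟩⟩

end Isometry

section Reflection

variable {R M : Type*} [CommRing R] [AddCommGroup M] [Module R M] (Q : QuadraticForm R M)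

/-- The reflection `v ↦ v - (polar Q u v / Q u) • u` in a vector `u` such that `Q u` is invertible,
as an isometry of `Q`. Reflections serve to move a vector to another one of the same length. -/
def reflectionIsometry (u : M) [Invertible (Q u)] : Q.IsometryEquiv Q where
  __ := Module.reflection (x := u) (f := ⅟(Q u) • Q.polarBilin u) (by simp [mul_left_comm])
  map_app' v := by
    change Q (v - (⅟(Q u) * polar Q u v) • u) = Q v
    rw [quadraticMap_map_sub, Q.map_smul, polar_smul_right, polar_comm Q v u]
    simp only [smul_eq_mul]
    linear_combination ⅟(Q u) * polar Q u v ^ 2 * invOf_mul_self (Q u)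

theorem reflectionIsometry_apply (u v : M) [Invertible (Q u)] :
    reflectionIsometry Q u v = v - (⅟(Q u) * polar Q u v) • u :=
  rfl

variable {Q}

theorem reflectionIsometry_sub_apply {x y : M} (hxy : Q x = Q y) [Invertible (Q (x - y))] :
    reflectionIsometry Q (x - y) x = y := by
  have hpolar : polar Q (x - y) x = Q (x - y) := by
    rw [quadraticMap_map_sub, polar_sub_left, polar_self, polar_comm Q y x, two_nsmul, ← hxy]
  rw [reflectionIsometry_apply, hpolar, invOf_mul_self, one_smul, sub_sub_cancel]

end Reflection

section Witt

variable {F V : Type*} [Field F] [AddCommGroup V] [Module F V]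
  {Q : QuadraticForm F V} {x y : V} {W W' : Submodule F V}

theorem exists_isometryEquiv_apply_eq (hF : (2 : F) ≠ 0) (hxy : Q x = Q y) (hx : Q x ≠ 0) :
    ∃ σ : Q.IsometryEquiv Q, σ x = y := by
  by_cases hsub : Q (x - y) = 0
  · have hadd : Q (x - -y) ≠ 0 := by
      have parallelogram : Q (x - -y) = 2 * (2 * Q x) := by
        rw [sub_neg_eq_add, ← add_zero (Q (x + y)), ← hsub, quadraticMap_map_add_add_map_sub,
          ← hxy, ← two_mul, nsmul_eq_mul, Nat.cast_ofNat]
      rw [parallelogram]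
      exact mul_ne_zero hF (mul_ne_zero hF hx)
    let := invertibleOfNonzero hadd
    let negation : Q.IsometryEquiv Q := { LinearEquiv.neg F with map_app' := Q.map_neg }
    refine ⟨(reflectionIsometry Q (x - -y)).trans negation, ?_⟩
    change -reflectionIsometry Q (x - -y) x = y
    rw [reflectionIsometry_sub_apply (hxy.trans (Q.map_neg y).symm), neg_neg]
  · let := invertibleOfNonzero hsub
    exact ⟨reflectionIsometry Q (x - y), reflectionIsometry_sub_apply hxy⟩

theorem eq_ker_polarBilin_of_isCompl (hF : (2 : F) ≠ 0) (hx : Q x ≠ 0)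
    (hW : IsCompl (span F {x}) W) (hxW : ∀ w ∈ W, polar Q x w = 0) :
    W = (Q.polarBilin x).ker := by
  have hxx : Q.polarBilin x x ≠ 0 := by simpa [polar_self, hF] using hx
  have hker := isCompl_span_singleton_ker hxx
  refine eq_of_le_of_inf_le_of_sup_le (z := span F {x}) hxW ?_ ?_
  · rw [hker.symm.inf_eq_bot, hW.symm.inf_eq_bot]
  · rw [hker.symm.sup_eq_top, hW.symm.sup_eq_top]

theorem equivalent_of_isCompl_of_polar_eq_zero (hF : (2 : F) ≠ 0)
    (hx : x ≠ 0) (hy : y ≠ 0) (hxy : Q x = Q y)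
    (hW : IsCompl (span F {x}) W) (hxW : ∀ w ∈ W, polar Q x w = 0)
    (hW' : IsCompl (span F {y}) W') (hyW' : ∀ w ∈ W', polar Q y w = 0) :
    (Q.comp W.subtype).Equivalent (Q.comp W'.subtype) := by
  by_cases hQx : Q x = 0
  · obtain ⟨φ, hφx, hφy⟩ := exists_dual_apply_ne_zero_and_apply_ne_zero (F := F) hx hy
    have hradx := span_singleton_le_radical_of_isCompl hQx hW hxW
    have hrady := span_singleton_le_radical_of_isCompl (hxy.symm.trans hQx) hW' hyW'
    have hWφ : (Q.comp W.subtype).Equivalent (Q.comp φ.ker.subtype) :=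
      (equivalent_lift_of_isCompl hradx hW).trans
        (equivalent_lift_of_isCompl hradx (isCompl_span_singleton_ker hφx)).symm
    have hφW' : (Q.comp φ.ker.subtype).Equivalent (Q.comp W'.subtype) :=
      (equivalent_lift_of_isCompl hrady (isCompl_span_singleton_ker hφy)).trans
        (equivalent_lift_of_isCompl hrady hW').symm
    exact hWφ.trans hφW'
  · obtain ⟨σ, rfl⟩ := exists_isometryEquiv_apply_eq hF hxy hQx
    rw [eq_ker_polarBilin_of_isCompl hF hQx hW hxW,
      eq_ker_polarBilin_of_isCompl hF (hxy ▸ hQx) hW' hyW']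
    exact equivalent_comp_ker_polarBilin σ x

end Witt

theorem witt_cancellation_geometric_general {F V ι κ : Type*} [Field F] [AddCommGroup V]
    [Module F V] (hF : (2 : F) ≠ 0) {Q : QuadraticForm F V}
    (e : Module.Basis ι F V) (f : Module.Basis κ F V) {i : ι} {j : κ}
    (he : ∀ k ≠ i, polar Q (e i) (e k) = 0) (hf : ∀ k ≠ j, polar Q (f j) (f k) = 0)
    (hij : Q (e i) = Q (f j)) :
    (Q.comp (span F (e '' {k | k ≠ i})).subtype).Equivalent
      (Q.comp (span F (f '' {k | k ≠ j})).subtype) :=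
  equivalent_of_isCompl_of_polar_eq_zero hF (e.ne_zero i) (f.ne_zero j) hij
    (isCompl_span_singleton_span_image_ne e i)
    (polar_eq_zero_of_mem_span (Set.forall_mem_image.2 he))
    (isCompl_span_singleton_span_image_ne f j)
    (polar_eq_zero_of_mem_span (Set.forall_mem_image.2 hf))

/-- Witt cancellation, geometric form: if `{e i}` and `{f i}` are orthogonal bases of a
non-degenerate quadratic space `(V, q)` with `q (e 0) = q (f 0)`, then `q` restricted to
the span of `{e i : i ≠ 0}` is isometric to `q` restricted to the span of `{f i : i ≠ 0}`. -/
theorem witt_cancellation_geometric {F V : Type*} [Field F] [AddCommGroup V] [Module F V]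
    [FiniteDimensional F V] (hF : (2 : F) ≠ 0)
    {n : ℕ} (hn : 1 < n) (hdim : Module.finrank F V = n)
    (Q : QuadraticForm F V)
    (hQ : ∀ v : V, (∀ w : V, QuadraticMap.polar Q v w / 2 = 0) → v = 0)
    (e f : Module.Basis (Fin n) F V)
    (he : ∀ i j : Fin n, i ≠ j → QuadraticMap.polar Q (e i) (e j) / 2 = 0)
    (hf : ∀ i j : Fin n, i ≠ j → QuadraticMap.polar Q (f i) (f j) / 2 = 0)
    (h1 : Q (e ⟨0, by omega⟩) = Q (f ⟨0, by omega⟩)) :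
    QuadraticMap.Equivalent
      (Q.comp (Submodule.span F (e '' {i : Fin n | i ≠ ⟨0, by omega⟩})).subtype)
      (Q.comp (Submodule.span F (f '' {i : Fin n | i ≠ ⟨0, by omega⟩})).subtype) := by
  simp only [div_eq_zero_iff, hF, or_false] at he hf
  exact witt_cancellation_geometric_general hF e f (fun k hk => he _ k hk.symm)
    (fun k hk => hf _ k hk.symm) h1
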